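/- Let b_{ij} = ⟨A X_*(∂/∂x^i), X_*(∂/∂x^j)⟩ be the components of the pullback X*II of the second fundamental form of the Killing graph Σ to P. Then its covariant derivative in P is related to the covariant derivative of II on Σ by ∇_k b_{ij} = ∇^Σ_k a_{ij} + (W/γ) a_{ik} a_j^l u_l + (W/γ) a_{jk} a_i^l u_l + (u_i u_k/(2γ²)) a_{jl} γ^l + (u_j u_k/(2γ²)) a_{il} γ^l. -/

import Mathlib

/-!
Formalization of the setting of "Mean curvature flow of Killing graphs"
(Lira–Wanderley).  The integral leaf `P` of the distribution orthogonal to the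
Killing field `Y` is presented in coordinates as `ℝⁿ` (points `Fin n → ℝ`)
carrying a Riemannian metric `σ`; the ambient manifold is the warped product
`M = P ×_{1/√γ} ℝ` with coordinates `(x⁰ = s, x)` and metric
`ḡ = σ + (1/γ) ds²`, where `γ = 1/|Y|²` and `Y = ∂/∂x⁰`.  All geometric
quantities (Christoffel symbols, second fundamental form and mean curvature of
a Killing graph, ambient Ricci curvature, …) are defined concretely from this
data.
-/

noncomputable section

open Real MeasureTheory Filter Topology

namespace KMCF

variable {n : ℕ}

/-- Partial derivative of a function on the coordinate chart of the leaf `P`. -/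
def pd (f : (Fin n → ℝ) → ℝ) (i : Fin n) (x : Fin n → ℝ) : ℝ :=
  fderiv ℝ f x (Pi.single i 1)

/-- Component of an ambient tangent vector `(v⁰, vⁱ)` of `M = P ×_{1/√γ} ℝ`. -/
def vComp (v : ℝ × (Fin n → ℝ)) (a : Fin (n + 1)) : ℝ :=
  if ha : a = 0 then v.1 else v.2 (a.pred ha)

/-- Ambient partial derivative (nothing depends on the flow parameter `x⁰`). -/
def ambPd (f : (Fin n → ℝ) → ℝ) (a : Fin (n + 1)) (x : Fin n → ℝ) : ℝ :=
  if ha : a = 0 then 0 else pd f (a.pred ha) x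

/-- Coordinate tangent vectors `X_* ∂_i = ∂_i + u_i ∂_0` of the Killing graph
`X(x) = ϑ(u(x), x)`. -/
def tangentV (u : (Fin n → ℝ) → ℝ) (i : Fin n) (x : Fin n → ℝ) : ℝ × (Fin n → ℝ) :=
  (pd u i x, Pi.single i 1)

/-- Coordinate data of the integral leaf `P`: the metric `σ`, its inverse, and
the warping function `γ = 1/|Y|²` of the Killing field `Y`. -/
structure LeafData (n : ℕ) where
  σ : (Fin n → ℝ) → Fin n → Fin n → ℝ
  σInv : (Fin n → ℝ) → Fin n → Fin n → ℝ
  γ : (Fin n → ℝ) → ℝ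
  σ_symm : ∀ x i j, σ x i j = σ x j i
  σ_posdef : ∀ x (v : Fin n → ℝ), v ≠ 0 → 0 < ∑ i, ∑ j, σ x i j * v i * v j
  σInv_mul_σ : ∀ x i j, (∑ k, σInv x i k * σ x k j) = if i = j then (1 : ℝ) else 0
  σ_smooth : ∀ i j, ContDiff ℝ (⊤ : ℕ∞) fun x => σ x i j
  γ_pos : ∀ x, 0 < γ x
  γ_smooth : ContDiff ℝ (⊤ : ℕ∞) γ

namespace LeafData

variable (D : LeafData n)

/-- Christoffel symbols `Γ^k_{ij}` of the leaf metric `σ`. -/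
def Γc (x : Fin n → ℝ) (i j k : Fin n) : ℝ :=
  (1 / 2) * ∑ l, D.σInv x k l *
    (pd (fun y => D.σ y j l) i x + pd (fun y => D.σ y i l) j x -
      pd (fun y => D.σ y i j) l x)

/-- Covariant Hessian `f_{i;j}` in `P`. -/
def hess (f : (Fin n → ℝ) → ℝ) (i j : Fin n) (x : Fin n → ℝ) : ℝ :=
  pd (pd f j) i x - ∑ k, D.Γc x i j k * pd f k x

/-- Raised gradient components `f^i = σ^{ij} f_j`. -/
def gradUp (f : (Fin n → ℝ) → ℝ) (i : Fin n) (x : Fin n → ℝ) : ℝ :=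
  ∑ j, D.σInv x i j * pd f j x

/-- Inner product `⟨∇f, ∇g⟩` of gradients in `P`. -/
def inner2 (f g : (Fin n → ℝ) → ℝ) (x : Fin n → ℝ) : ℝ :=
  ∑ i, ∑ j, D.σInv x i j * pd f i x * pd g j x

/-- `|∇u|²`. -/
def gradSq (u : (Fin n → ℝ) → ℝ) (x : Fin n → ℝ) : ℝ := D.inner2 u u x

/-- `W = √(γ + |∇u|²)`. -/
def Wf (u : (Fin n → ℝ) → ℝ) (x : Fin n → ℝ) : ℝ :=
  Real.sqrt (D.γ x + D.gradSq u x)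

/-- Divergence in `P` of a vector field with raised components `Z^i`. -/
def divP (Z : Fin n → (Fin n → ℝ) → ℝ) (x : Fin n → ℝ) : ℝ :=
  ∑ i, (pd (Z i) i x + ∑ k, D.Γc x i k i * Z k x)

/-- Divergence in the ambient warped product `M = P ×_{1/√γ} ℝ` of an
`s`-independent horizontal vector field (`Γ̄⁰_{0i} = −γ_i/(2γ)`). -/
def divM (Z : Fin n → (Fin n → ℝ) → ℝ) (x : Fin n → ℝ) : ℝ :=
  D.divP Z x - ∑ i, (pd D.γ i x / (2 * D.γ x)) * Z i x

/-- The ambient warped-product metric `ḡ` of `M` in the coordinates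
`(x⁰ = s, x)`:  `ḡ₀₀ = 1/γ`, `ḡ₀ᵢ = 0`, `ḡᵢⱼ = σᵢⱼ`. -/
def ambG (x : Fin n → ℝ) (a b : Fin (n + 1)) : ℝ :=
  if ha : a = 0 then (if b = 0 then 1 / D.γ x else 0)
  else if hb : b = 0 then 0 else D.σ x (a.pred ha) (b.pred hb)

/-- The inverse ambient metric. -/
def ambGInv (x : Fin n → ℝ) (a b : Fin (n + 1)) : ℝ :=
  if ha : a = 0 then (if b = 0 then D.γ x else 0)
  else if hb : b = 0 then 0 else D.σInv x (a.pred ha) (b.pred hb)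

/-- Ambient Christoffel symbols `Γ̄^a_{bc}` of the warped-product metric. -/
def ambΓ (x : Fin n → ℝ) (a b c : Fin (n + 1)) : ℝ :=
  (1 / 2) * ∑ e, D.ambGInv x a e *
    (ambPd (fun y => D.ambG y b e) c x + ambPd (fun y => D.ambG y c e) b x -
      ambPd (fun y => D.ambG y b c) e x)

/-- Ambient curvature tensor `R̄^a_{bcd}`. -/
def ambRiem (x : Fin n → ℝ) (a b c d : Fin (n + 1)) : ℝ :=
  ambPd (fun y => D.ambΓ y a d b) c x - ambPd (fun y => D.ambΓ y a c b) d x +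
    (∑ e, D.ambΓ x a c e * D.ambΓ x e d b) -
    ∑ e, D.ambΓ x a d e * D.ambΓ x e c b

/-- Ambient Ricci curvature as a bilinear form on tangent vectors of `M`. -/
def Ric (x : Fin n → ℝ) (v w : ℝ × (Fin n → ℝ)) : ℝ :=
  ∑ b, ∑ c, (∑ a, D.ambRiem x a b a c) * vComp v b * vComp w c

/-- The ambient Riemannian inner product `⟨·,·⟩` at `x`. -/
def ambInner (x : Fin n → ℝ) (v w : ℝ × (Fin n → ℝ)) : ℝ :=
  ∑ a, ∑ b, D.ambG x a b * vComp v a * vComp w b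

/-- Ambient covariant derivative `∇̄_v Z` of an `s`-independent vector field
`Z` in the direction of the tangent vector `v` at `x`. -/
def ambCov (Z : (Fin n → ℝ) → ℝ × (Fin n → ℝ)) (v : ℝ × (Fin n → ℝ))
    (x : Fin n → ℝ) : ℝ × (Fin n → ℝ) :=
  ((∑ i, v.2 i * pd (fun y => (Z y).1) i x) +
      ∑ b, ∑ c, D.ambΓ x 0 b c * vComp v b * vComp (Z x) c,
    fun k =>
      (∑ i, v.2 i * pd (fun y => (Z y).2 k) i x) +
        ∑ b, ∑ c, D.ambΓ x k.succ b c * vComp v b * vComp (Z x) c)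

/-- The unit normal `N = (1/W)(γ Y − ϑ_* ∇u)` of the Killing graph. -/
def normalN (u : (Fin n → ℝ) → ℝ) (x : Fin n → ℝ) : ℝ × (Fin n → ℝ) :=
  (D.γ x / D.Wf u x, fun k => -D.gradUp u k x / D.Wf u x)

/-- Second fundamental form `a_{ij} = ⟨∇̄_{X_*∂_i} X_*∂_j, N⟩` of the graph. -/
def sff (u : (Fin n → ℝ) → ℝ) (i j : Fin n) (x : Fin n → ℝ) : ℝ :=
  D.ambInner x (D.ambCov (fun y => tangentV u j y) (tangentV u i x) x)
    (D.normalN u x)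

/-- Induced metric `g_{ij} = σ_{ij} + u_i u_j / γ` of the graph. -/
def gmet (u : (Fin n → ℝ) → ℝ) (x : Fin n → ℝ) (i j : Fin n) : ℝ :=
  D.σ x i j + pd u i x * pd u j x / D.γ x

/-- Inverse induced metric `g^{ij} = σ^{ij} − u^i u^j / W²`. -/
def gInv (u : (Fin n → ℝ) → ℝ) (x : Fin n → ℝ) (i j : Fin n) : ℝ :=
  D.σInv x i j - D.gradUp u i x * D.gradUp u j x / (D.Wf u x) ^ 2

/-- `n` times the mean curvature of the graph: `nH = g^{ij} a_{ij}`. -/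
def nH (u : (Fin n → ℝ) → ℝ) (x : Fin n → ℝ) : ℝ :=
  ∑ i, ∑ j, D.gInv u x i j * D.sff u i j x

/-- Christoffel symbols of the induced metric of the graph. -/
def Γg (u : (Fin n → ℝ) → ℝ) (x : Fin n → ℝ) (i j k : Fin n) : ℝ :=
  (1 / 2) * ∑ l, D.gInv u x k l *
    (pd (fun y => D.gmet u y j l) i x + pd (fun y => D.gmet u y i l) j x -
      pd (fun y => D.gmet u y i j) l x)

/-- Covariant derivative `∇_k T_{ij}` in `P` of a 2-tensor. -/
def covP2 (T : Fin n → Fin n → (Fin n → ℝ) → ℝ) (k i j : Fin n)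
    (x : Fin n → ℝ) : ℝ :=
  pd (T i j) k x - ∑ l, D.Γc x k i l * T l j x - ∑ l, D.Γc x k j l * T i l x

/-- Covariant derivative `∇^Σ_k T_{ij}` on the graph of a 2-tensor. -/
def covG2 (u : (Fin n → ℝ) → ℝ) (T : Fin n → Fin n → (Fin n → ℝ) → ℝ)
    (k i j : Fin n) (x : Fin n → ℝ) : ℝ :=
  pd (T i j) k x - ∑ l, D.Γg u x k i l * T l j x - ∑ l, D.Γg u x k j l * T i l x

/-- Components of the gradient on `Σ` of a function of `x`. -/
def gradG (u f : (Fin n → ℝ) → ℝ) (j : Fin n) (x : Fin n → ℝ) : ℝ :=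
  ∑ k, D.gInv u x j k * pd f k x

/-- Components, in the basis `X_*∂_i`, of the tangential projection `Y^T`
of the Killing field:  `Y^T = (u^i/W²) X_*∂_i`. -/
def YTc (u : (Fin n → ℝ) → ℝ) (i : Fin n) (x : Fin n → ℝ) : ℝ :=
  D.gradUp u i x / (D.Wf u x) ^ 2

/-- Squared norm `|A|²` of the second fundamental form. -/
def Anorm2 (u : (Fin n → ℝ) → ℝ) (x : Fin n → ℝ) : ℝ :=
  ∑ i, ∑ j, ∑ k, ∑ l,
    D.gInv u x i k * D.gInv u x j l * D.sff u i j x * D.sff u k l x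

/-- Mixed components `a_i^j = g^{jk} a_{ik}` of the Weingarten map. -/
def aMix (u : (Fin n → ℝ) → ℝ) (i j : Fin n) (x : Fin n → ℝ) : ℝ :=
  ∑ k, D.gInv u x j k * D.sff u i k x

/-- Raised spatial components `N^j = −u^j/W` of the unit normal. -/
def NupS (u : (Fin n → ℝ) → ℝ) (j : Fin n) (x : Fin n → ℝ) : ℝ :=
  -D.gradUp u j x / D.Wf u x

/-- The support-type function `θ = ⟨∇d, N⟩`. -/
def theta (u d : (Fin n → ℝ) → ℝ) (x : Fin n → ℝ) : ℝ :=
  D.ambInner x ((0 : ℝ), fun k => D.gradUp d k x) (D.normalN u x)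

/-- `κ = ⟨γ ∇̄_Y Y, ∇d⟩ = ⟨∇γ, ∇d⟩/(2γ)`. -/
def kappa (d : (Fin n → ℝ) → ℝ) (x : Fin n → ℝ) : ℝ :=
  D.inner2 D.γ d x / (2 * D.γ x)

/-- The Korevaar auxiliary function `h = 1 + α d − ϕ ⟨∇d, N⟩`. -/
def hKor (u d ϕ : (Fin n → ℝ) → ℝ) (α : ℝ) (x : Fin n → ℝ) : ℝ :=
  1 + α * d x - ϕ x * D.theta u d x

/-- `η = e^{Ku} h`. -/
def etaKor (u d ϕ : (Fin n → ℝ) → ℝ) (K α : ℝ) (x : Fin n → ℝ) : ℝ :=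
  Real.exp (K * u x) * D.hKor u d ϕ α x

/-- Riemannian integral over `Ω ⊆ P` (density `√(det σ)`). -/
def intP (Ω : Set (Fin n → ℝ)) (f : (Fin n → ℝ) → ℝ) : ℝ :=
  ∫ x in Ω, f x * Real.sqrt (Matrix.det (Matrix.of fun i j => D.σ x i j))

/-- The nonparametric mean curvature flow equation (23):
`u_t = (σ^{ij} − u^i u^j/W²) u_{i;j} − (1/(2γ) + 1/(2W²)) γ^i u_i − W𝓗`. -/
def SolvesFlowOn (Ω : Set (Fin n → ℝ)) (J : Set ℝ) (𝓗 : (Fin n → ℝ) → ℝ)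
    (u : (Fin n → ℝ) → ℝ → ℝ) : Prop :=
  ∀ x ∈ Ω, ∀ t ∈ J,
    deriv (u x) t =
      (∑ i, ∑ j, D.gInv (fun y => u y t) x i j * D.hess (fun y => u y t) i j x) -
        (1 / (2 * D.γ x) + 1 / (2 * (D.Wf (fun y => u y t) x) ^ 2)) *
          D.inner2 D.γ (fun y => u y t) x -
        D.Wf (fun y => u y t) x * 𝓗 x

/-- The divergence form (21) of the flow equation:
`u_t = W div(∇u/W) − W𝓗 − γ⟨∇̄_Y Y, ∇u⟩`. -/
def SolvesFlowDivOn (Ω : Set (Fin n → ℝ)) (J : Set ℝ) (𝓗 : (Fin n → ℝ) → ℝ)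
    (u : (Fin n → ℝ) → ℝ → ℝ) : Prop :=
  ∀ x ∈ Ω, ∀ t ∈ J,
    deriv (u x) t =
      D.Wf (fun y => u y t) x *
          D.divP (fun i y => D.gradUp (fun z => u z t) i y /
            D.Wf (fun z => u z t) y) x -
        D.Wf (fun y => u y t) x * 𝓗 x -
        D.γ x * (D.inner2 D.γ (fun y => u y t) x / (2 * (D.γ x) ^ 2))

/-- The Neumann condition `⟨N, ν⟩ = ϕ` on `∂Ω`. -/
def NeumannOn (Ω : Set (Fin n → ℝ)) (J : Set ℝ) (ν : (Fin n → ℝ) → Fin n → ℝ)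
    (ϕ : (Fin n → ℝ) → ℝ) (u : (Fin n → ℝ) → ℝ → ℝ) : Prop :=
  ∀ x ∈ frontier Ω, ∀ t ∈ J,
    D.ambInner x (D.normalN (fun y => u y t) x) ((0 : ℝ), ν x) = ϕ x

/-- The stationary prescribed mean curvature equation (5) with the prescribed
contact angle condition (6). -/
def SolvesStationary (Ω : Set (Fin n → ℝ)) (ν : (Fin n → ℝ) → Fin n → ℝ)
    (𝓗 ϕ : (Fin n → ℝ) → ℝ) (v : (Fin n → ℝ) → ℝ) : Prop :=
  (∀ x ∈ Ω,
      D.divP (fun i y => D.gradUp v i y / D.Wf v y) x -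
          D.γ x * (D.inner2 D.γ v x / (2 * (D.γ x) ^ 2 * D.Wf v x)) = 𝓗 x) ∧
    ∀ x ∈ frontier Ω, D.ambInner x (D.normalN v x) ((0 : ℝ), ν x) = ϕ x

/-- The translating-soliton equation (41) with Neumann condition (42). -/
def SolvesSoliton (Ω : Set (Fin n → ℝ)) (ν : (Fin n → ℝ) → Fin n → ℝ)
    (𝓗 ϕ : (Fin n → ℝ) → ℝ) (C : ℝ) (v : (Fin n → ℝ) → ℝ) : Prop :=
  (∀ x ∈ Ω,
      D.divP (fun i y => D.gradUp v i y / D.Wf v y) x -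
          D.γ x * (D.inner2 D.γ v x / (2 * (D.γ x) ^ 2 * D.Wf v x)) =
        𝓗 x + C / D.Wf v x) ∧
    ∀ x ∈ frontier Ω, D.ambInner x (D.normalN v x) ((0 : ℝ), ν x) = ϕ x

end LeafData

end KMCF

namespace KMCF

open LeafData

section Helpers

variable {n : ℕ}

lemma pd_const' (c : ℝ) (i : Fin n) (x : Fin n → ℝ) : pd (fun _ => c) i x = 0 := by
  simp [pd]

lemma pd_symm (u : (Fin n → ℝ) → ℝ) (hu : ContDiff ℝ (⊤ : ℕ∞) u) (i j : Fin n)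
    (x : Fin n → ℝ) : pd (pd u i) j x = pd (pd u j) i x := by
  have hd : Differentiable ℝ (fderiv ℝ u) :=
    (hu.fderiv_right (m := 1) (by norm_cast)).differentiable (by norm_num)
  have h1 : ∀ i j : Fin n, pd (pd u i) j x =
      fderiv ℝ (fderiv ℝ u) x (Pi.single j 1) (Pi.single i 1) := by
    intro i j
    unfold pd
    rw [fderiv_clm_apply (hd x) (differentiableAt_const _)]
    simp
  have hs : IsSymmSndFDerivAt ℝ u x :=
    (hu.contDiffAt).isSymmSndFDerivAt (by simp; norm_cast)
  rw [h1, h1]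
  exact hs _ _

lemma pd_diff (u : (Fin n → ℝ) → ℝ) (hu : ContDiff ℝ (⊤ : ℕ∞) u) (i : Fin n) :
    Differentiable ℝ (pd u i) := by
  have hd : Differentiable ℝ (fderiv ℝ u) :=
    (hu.fderiv_right (m := 1) (by norm_cast)).differentiable (by norm_num)
  unfold pd
  exact fun x => (hd x).clm_apply (differentiableAt_const _)

lemma vComp_zero (v : ℝ × (Fin n → ℝ)) : vComp v 0 = v.1 := by simp [vComp]
lemma vComp_succ (v : ℝ × (Fin n → ℝ)) (i : Fin n) : vComp v i.succ = v.2 i := by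
  simp [vComp]
lemma ambPd_zero (f : (Fin n → ℝ) → ℝ) (x : Fin n → ℝ) : ambPd f 0 x = 0 := by simp [ambPd]
lemma ambPd_succ (f : (Fin n → ℝ) → ℝ) (i : Fin n) (x : Fin n → ℝ) :
    ambPd f i.succ x = pd f i x := by simp [ambPd]

variable (D : LeafData n)

lemma ambG_00 (x : Fin n → ℝ) : D.ambG x 0 0 = 1 / D.γ x := by simp [ambG]
lemma ambG_0s (x : Fin n → ℝ) (i : Fin n) : D.ambG x 0 i.succ = 0 := by simp [ambG]
lemma ambG_s0 (x : Fin n → ℝ) (i : Fin n) : D.ambG x i.succ 0 = 0 := by simp [ambG]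
lemma ambG_ss (x : Fin n → ℝ) (i j : Fin n) : D.ambG x i.succ j.succ = D.σ x i j := by
  simp [ambG]
lemma ambGInv_00 (x : Fin n → ℝ) : D.ambGInv x 0 0 = D.γ x := by simp [ambGInv]
lemma ambGInv_0s (x : Fin n → ℝ) (i : Fin n) : D.ambGInv x 0 i.succ = 0 := by simp [ambGInv]
lemma ambGInv_s0 (x : Fin n → ℝ) (i : Fin n) : D.ambGInv x i.succ 0 = 0 := by simp [ambGInv]
lemma ambGInv_ss (x : Fin n → ℝ) (i j : Fin n) :
    D.ambGInv x i.succ j.succ = D.σInv x i j := by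
  simp [ambGInv]

lemma pd_inv_γ (i : Fin n) (x : Fin n → ℝ) :
    pd (fun y => 1 / D.γ y) i x = - pd D.γ i x / D.γ x ^ 2 := by
  have hγ : DifferentiableAt ℝ D.γ x := (D.γ_smooth.differentiable (by simp)) x
  have := (hasDerivAt_inv (D.γ_pos x).ne').comp_hasFDerivAt x hγ.hasFDerivAt
  unfold pd
  have h2 : (fun y => 1 / D.γ y) = (Inv.inv ∘ D.γ) := by ext y; simp
  rw [h2, this.fderiv]
  simp
  ring

lemma ambΓ_000 (x : Fin n → ℝ) : D.ambΓ x 0 0 0 = 0 := by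
  simp [ambΓ, Fin.sum_univ_succ, ambGInv_0s, ambPd_zero]
lemma ambΓ_00s (x : Fin n → ℝ) (i : Fin n) :
    D.ambΓ x 0 0 i.succ = - pd D.γ i x / (2 * D.γ x) := by
  have := (D.γ_pos x).ne'
  simp only [ambΓ, Fin.sum_univ_succ, ambGInv_0s, ambGInv_00, ambPd_zero, ambPd_succ,
    ambG_00, ambG_0s, ambG_s0, pd_const', pd_inv_γ]
  simp
  field_simp
lemma ambΓ_0s0 (x : Fin n → ℝ) (i : Fin n) :
    D.ambΓ x 0 i.succ 0 = - pd D.γ i x / (2 * D.γ x) := by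
  have := (D.γ_pos x).ne'
  simp only [ambΓ, Fin.sum_univ_succ, ambGInv_0s, ambGInv_00, ambPd_zero, ambPd_succ,
    ambG_00, ambG_0s, ambG_s0, pd_const', pd_inv_γ]
  simp
  field_simp
lemma ambΓ_0ss (x : Fin n → ℝ) (i j : Fin n) : D.ambΓ x 0 i.succ j.succ = 0 := by
  simp [ambΓ, Fin.sum_univ_succ, ambGInv_0s, ambGInv_00, ambPd_zero, ambPd_succ,
    ambG_0s, ambG_s0, pd_const']
lemma ambΓ_s00 (x : Fin n → ℝ) (k : Fin n) :
    D.ambΓ x k.succ 0 0 = D.gradUp D.γ k x / (2 * D.γ x ^ 2) := by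
  simp only [ambΓ, Fin.sum_univ_succ, ambGInv_s0, ambGInv_ss, ambPd_zero, ambPd_succ,
    ambG_00, ambG_0s, ambG_s0, pd_const', pd_inv_γ, gradUp, Finset.sum_div, Finset.mul_sum]
  simp only [zero_mul, zero_add, Finset.mul_sum]
  refine Finset.sum_congr rfl fun l _ => ?_
  field_simp
  ring
lemma ambΓ_s0s (x : Fin n → ℝ) (k i : Fin n) : D.ambΓ x k.succ 0 i.succ = 0 := by
  simp [ambΓ, Fin.sum_univ_succ, ambGInv_s0, ambGInv_ss, ambPd_zero, ambPd_succ,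
    ambG_0s, pd_const']
lemma ambΓ_ss0 (x : Fin n → ℝ) (k i : Fin n) : D.ambΓ x k.succ i.succ 0 = 0 := by
  simp [ambΓ, Fin.sum_univ_succ, ambGInv_s0, ambGInv_ss, ambPd_zero, ambPd_succ,
    ambG_0s, ambG_s0, pd_const']
lemma ambΓ_sss (x : Fin n → ℝ) (k i j : Fin n) :
    D.ambΓ x k.succ i.succ j.succ = D.Γc x j i k := by
  have h : (fun y => D.σ y i j) = fun y => D.σ y j i := by ext y; exact D.σ_symm y i j
  simp [ambΓ, Γc, Fin.sum_univ_succ, ambGInv_s0, ambGInv_ss, ambPd_succ, ambG_ss, h]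

lemma Γc_symm (x : Fin n → ℝ) (i j k : Fin n) : D.Γc x i j k = D.Γc x j i k := by
  have h : (fun y => D.σ y i j) = fun y => D.σ y j i := by ext y; exact D.σ_symm y i j
  unfold Γc
  rw [h]
  congr 1
  exact Finset.sum_congr rfl fun l _ => by ring

lemma σInv_matrix (x : Fin n → ℝ) :
    (Matrix.of fun i j => D.σInv x i j) * (Matrix.of fun i j => D.σ x i j) = 1 := by
  ext i j
  simp [Matrix.mul_apply, D.σInv_mul_σ, Matrix.one_apply]

lemma σ_mul_σInv (x : Fin n → ℝ) (i j : Fin n) :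
    (∑ k, D.σ x i k * D.σInv x k j) = if i = j then (1 : ℝ) else 0 := by
  have h := mul_eq_one_comm.mp (σInv_matrix D x)
  have := congrFun (congrFun h i) j
  simpa [Matrix.mul_apply, Matrix.one_apply] using this

lemma σInv_symm (x : Fin n → ℝ) (i j : Fin n) : D.σInv x i j = D.σInv x j i := by
  have h1 := σInv_matrix D x
  have h2 := mul_eq_one_comm.mp h1
  have hs : (Matrix.of fun i j => D.σ x i j).transpose = Matrix.of fun i j => D.σ x i j := by
    ext i j; simp [D.σ_symm x i j]
  have h3 := congrArg Matrix.transpose h2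
  rw [Matrix.transpose_mul, hs, Matrix.transpose_one] at h3
  have h4 : (Matrix.of fun i j => D.σInv x i j).transpose = Matrix.of fun i j => D.σInv x i j :=
    left_inv_eq_right_inv h3 h2
  have := congrFun (congrFun h4 j) i
  simpa using this

/-- Lowering a raised gradient. -/
lemma lower_gradUp (f : (Fin n → ℝ) → ℝ) (x : Fin n → ℝ) (i : Fin n) :
    ∑ k, D.σ x i k * D.gradUp f k x = pd f i x := by
  simp only [gradUp, Finset.mul_sum]
  rw [Finset.sum_comm]
  simp only [← mul_assoc, ← Finset.sum_mul, σ_mul_σInv]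
  simp

lemma inner2_eq (f g : (Fin n → ℝ) → ℝ) (x : Fin n → ℝ) :
    D.inner2 f g x = ∑ i, pd f i x * D.gradUp g i x := by
  simp only [inner2, gradUp, Finset.mul_sum]
  exact Finset.sum_congr rfl fun i _ => Finset.sum_congr rfl fun j _ => by ring

lemma inner2_eq' (f g : (Fin n → ℝ) → ℝ) (x : Fin n → ℝ) :
    D.inner2 f g x = ∑ i, D.gradUp f i x * pd g i x := by
  simp only [inner2, gradUp, Finset.sum_mul]
  rw [Finset.sum_comm]
  exact Finset.sum_congr rfl fun i _ => Finset.sum_congr rfl fun j _ => by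
    rw [σInv_symm]

lemma gradSq_nonneg (u : (Fin n → ℝ) → ℝ) (x : Fin n → ℝ) : 0 ≤ D.gradSq u x := by
  have h : D.gradSq u x = ∑ i, ∑ j, D.σ x i j * D.gradUp u i x * D.gradUp u j x := by
    rw [gradSq, inner2_eq]
    refine Finset.sum_congr rfl fun i _ => ?_
    rw [← lower_gradUp, Finset.sum_mul]
    exact Finset.sum_congr rfl fun j _ => by ring
  rw [h]
  by_cases h0 : (fun i => D.gradUp u i x) = 0
  · have : ∀ i, D.gradUp u i x = 0 := fun i => congrFun h0 i
    simp [this]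
  · exact (D.σ_posdef x _ h0).le

lemma Wf_sq (u : (Fin n → ℝ) → ℝ) (x : Fin n → ℝ) :
    D.Wf u x ^ 2 = D.γ x + D.gradSq u x :=
  Real.sq_sqrt (add_nonneg (D.γ_pos x).le (gradSq_nonneg D u x))

lemma Wf_pos (u : (Fin n → ℝ) → ℝ) (x : Fin n → ℝ) : 0 < D.Wf u x :=
  Real.sqrt_pos.mpr (add_pos_of_pos_of_nonneg (D.γ_pos x) (gradSq_nonneg D u x))

/-- Formula for the second fundamental form. -/
lemma W_sff (u : (Fin n → ℝ) → ℝ) (x : Fin n → ℝ) (i j : Fin n) :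
    D.Wf u x * D.sff u i j x =
      D.hess u i j x - (pd D.γ i x * pd u j x + pd D.γ j x * pd u i x) / (2 * D.γ x)
        - pd u i x * pd u j x * D.inner2 D.γ u x / (2 * D.γ x ^ 2) := by
  have hγ := (D.γ_pos x).ne'
  have hW := (Wf_pos D u x).ne'
  have c0 : (D.ambCov (fun y => tangentV u j y) (tangentV u i x) x).1 =
      pd (pd u j) i x - (pd D.γ i x * pd u j x + pd D.γ j x * pd u i x) / (2 * D.γ x) := by
    simp only [ambCov, tangentV, Fin.sum_univ_succ, vComp_zero, vComp_succ, ambΓ_000, ambΓ_00s,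
      ambΓ_0s0, ambΓ_0ss]
    simp [Pi.single_apply]
    ring
  have ck : ∀ k, (D.ambCov (fun y => tangentV u j y) (tangentV u i x) x).2 k =
      D.Γc x i j k + D.gradUp D.γ k x / (2 * D.γ x ^ 2) * pd u i x * pd u j x := by
    intro k
    simp only [ambCov, tangentV, Fin.sum_univ_succ, vComp_zero, vComp_succ, ambΓ_s00, ambΓ_s0s,
      ambΓ_ss0, ambΓ_sss, pd_const']
    simp [Pi.single_apply]
    rw [Γc_symm]
    ring
  have hin : ∀ v : ℝ × (Fin n → ℝ), D.Wf u x * D.ambInner x v (D.normalN u x) =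
      v.1 - ∑ k, v.2 k * pd u k x := by
    intro v
    simp only [ambInner, Fin.sum_univ_succ, vComp_zero, vComp_succ, ambG_00, ambG_0s, ambG_s0,
      ambG_ss, normalN]
    have : ∀ k, ∑ l, D.σ x k l * v.2 k * (-D.gradUp u l x / D.Wf u x) =
        - (v.2 k * pd u k x) / D.Wf u x := by
      intro k
      rw [← lower_gradUp D u x k, Finset.mul_sum, ← Finset.sum_neg_distrib, Finset.sum_div]
      exact Finset.sum_congr rfl fun l _ => by ring
    simp only [zero_mul, Finset.sum_const_zero, add_zero, zero_add, this]
    rw [← Finset.sum_div, Finset.sum_neg_distrib]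
    field_simp
    ring
  rw [sff, hin, c0, hess, inner2_eq']
  simp only [ck, add_mul, Finset.sum_add_distrib]
  have : ∑ k, D.gradUp D.γ k x / (2 * D.γ x ^ 2) * pd u i x * pd u j x * pd u k x =
      pd u i x * pd u j x * (∑ k, D.gradUp D.γ k x * pd u k x) / (2 * D.γ x ^ 2) := by
    rw [Finset.mul_sum, Finset.sum_div]
    exact Finset.sum_congr rfl fun l _ => by ring
  rw [this]
  ring

lemma sff_symm (u : (Fin n → ℝ) → ℝ) (hu : ContDiff ℝ (⊤ : ℕ∞) u) (x : Fin n → ℝ)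
    (i j : Fin n) : D.sff u i j x = D.sff u j i x := by
  apply mul_left_cancel₀ (Wf_pos D u x).ne'
  rw [W_sff, W_sff, hess, hess, pd_symm u hu]
  simp only [Γc_symm D x i j]
  ring

lemma pd_gmet (u : (Fin n → ℝ) → ℝ) (hu : ContDiff ℝ (⊤ : ℕ∞) u) (x : Fin n → ℝ)
    (i j k : Fin n) :
    pd (fun y => D.gmet u y i j) k x = pd (fun y => D.σ y i j) k x +
      (pd (pd u i) k x * pd u j x + pd u i x * pd (pd u j) k x) / D.γ x -
      pd u i x * pd u j x * pd D.γ k x / D.γ x ^ 2 := by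
  have hγ : DifferentiableAt ℝ D.γ x := (D.γ_smooth.differentiable (by simp)) x
  have hσ : DifferentiableAt ℝ (fun y => D.σ y i j) x :=
    ((D.σ_smooth i j).differentiable (by simp)) x
  have h1 := (hasDerivAt_inv (D.γ_pos x).ne').comp_hasFDerivAt x hγ.hasFDerivAt
  have h2 := hσ.hasFDerivAt.add
    ((((pd_diff u hu i) x).hasFDerivAt.mul ((pd_diff u hu j) x).hasFDerivAt).mul h1)
  have h3 : HasFDerivAt (fun y => D.gmet u y i j) _ x := h2
  rw [pd, h3.fderiv]
  simp
  simp only [← pd.eq_1]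
  ring

/-- Contraction of `g^{-1}`. -/
lemma gInv_contract (u : (Fin n → ℝ) → ℝ) (x : Fin n → ℝ) (l : Fin n) (w : Fin n → ℝ) :
    ∑ m, D.gInv u x l m * w m = (∑ m, D.σInv x l m * w m) -
      D.gradUp u l x / D.Wf u x ^ 2 * ∑ m, D.gradUp u m x * w m := by
  rw [Finset.mul_sum, ← Finset.sum_sub_distrib]
  exact Finset.sum_congr rfl fun m _ => by rw [gInv]; ring

lemma gInv_pd (u : (Fin n → ℝ) → ℝ) (x : Fin n → ℝ) (l : Fin n) :
    ∑ m, D.gInv u x l m * pd u m x = D.γ x * D.gradUp u l x / D.Wf u x ^ 2 := by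
  have hW := (Wf_pos D u x).ne'
  rw [gInv_contract, ← inner2_eq', ← gradUp, ← gradSq,
    show D.gradSq u x = D.Wf u x ^ 2 - D.γ x by rw [Wf_sq]; ring]
  field_simp
  ring

lemma Γg_eq (u : (Fin n → ℝ) → ℝ) (hu : ContDiff ℝ (⊤ : ℕ∞) u) (x : Fin n → ℝ)
    (i j k : Fin n) :
    D.Γg u x i j k = D.Γc x i j k + D.sff u i j x * D.gradUp u k x / D.Wf u x +
      pd u i x * pd u j x / (2 * D.γ x ^ 2) * D.gradUp D.γ k x := by
  have hγ := (D.γ_pos x).ne'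
  have hW := (Wf_pos D u x).ne'
  set L : Fin n → ℝ := fun l => pd (fun y => D.σ y j l) i x + pd (fun y => D.σ y i l) j x -
      pd (fun y => D.σ y i j) l x with hL
  set c : ℝ := pd (pd u j) i x -
    (pd D.γ i x * pd u j x + pd D.γ j x * pd u i x) / (2 * D.γ x) with hc
  have hlow : ∀ l, (1 / 2) * (pd (fun y => D.gmet u y j l) i x + pd (fun y => D.gmet u y i l) j x -
      pd (fun y => D.gmet u y i j) l x) = (1 / 2) * L l + c / D.γ x * pd u l x +
        pd u i x * pd u j x / (2 * D.γ x ^ 2) * pd D.γ l x := by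
    intro l
    rw [pd_gmet D u hu, pd_gmet D u hu, pd_gmet D u hu, pd_symm u hu i j, pd_symm u hu i l,
      pd_symm u hu j l, hL, hc]
    field_simp
    ring
  have hΓu : ∑ m, D.gradUp u m x * L m = 2 * ∑ m, D.Γc x i j m * pd u m x := by
    simp only [Γc, gradUp, Finset.mul_sum, Finset.sum_mul]
    rw [Finset.sum_comm]
    refine Finset.sum_congr rfl fun a _ => Finset.sum_congr rfl fun b _ => ?_
    rw [σInv_symm D x b a, hL]
    ring
  have hΓ : ∑ m, D.σInv x k m * L m = 2 * D.Γc x i j k := by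
    rw [Γc]; ring
  have hγc : ∑ m, D.gInv u x k m * pd D.γ m x =
      D.gradUp D.γ k x - D.gradUp u k x / D.Wf u x ^ 2 * D.inner2 D.γ u x := by
    rw [gInv_contract, ← gradUp, inner2_eq]
    congr 2
    exact Finset.sum_congr rfl fun m _ => by ring
  have hS := W_sff D u x i j
  have hexp : D.Γg u x i j k = (1 / 2) * (∑ m, D.gInv u x k m * L m) +
      c / D.γ x * (∑ m, D.gInv u x k m * pd u m x) +
      pd u i x * pd u j x / (2 * D.γ x ^ 2) * ∑ m, D.gInv u x k m * pd D.γ m x := by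
    rw [Γg]
    simp only [Finset.mul_sum, ← Finset.sum_add_distrib]
    refine Finset.sum_congr rfl fun l _ => ?_
    linear_combination D.gInv u x k l * hlow l
  rw [hexp, hγc, gInv_pd, gInv_contract, hΓu, hΓ]
  have hs : D.sff u i j x = (c - (∑ m, D.Γc x i j m * pd u m x)
        - pd u i x * pd u j x * D.inner2 D.γ u x / (2 * D.γ x ^ 2)) / D.Wf u x := by
    rw [eq_div_iff hW, mul_comm, hS, hess, hc]; ring
  rw [hs]
  field_simp
  ring

lemma gInv_symm (u : (Fin n → ℝ) → ℝ) (x : Fin n → ℝ) (i j : Fin n) :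
    D.gInv u x i j = D.gInv u x j i := by
  rw [gInv, gInv, σInv_symm]; ring

lemma mix_contract (u : (Fin n → ℝ) → ℝ) (x : Fin n → ℝ) (j : Fin n) :
    (∑ l, (∑ m, D.gInv u x l m * D.sff u j m x) * pd u l x) =
      D.γ x / D.Wf u x ^ 2 * ∑ m, D.sff u j m x * D.gradUp u m x := by
  simp only [Finset.sum_mul]
  rw [Finset.sum_comm, Finset.mul_sum]
  refine Finset.sum_congr rfl fun m _ => ?_
  have := gInv_pd D u x m
  calc _ = D.sff u j m x * ∑ l, D.gInv u x m l * pd u l x := by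
        rw [Finset.mul_sum]
        exact Finset.sum_congr rfl fun l _ => by rw [gInv_symm]; ring
    _ = _ := by rw [this]; ring

lemma Γg_contract (u : (Fin n → ℝ) → ℝ) (hu : ContDiff ℝ (⊤ : ℕ∞) u) (x : Fin n → ℝ)
    (k i j : Fin n) :
    ∑ l, D.Γg u x k i l * D.sff u j l x = (∑ l, D.Γc x k i l * D.sff u j l x) +
      D.sff u i k x / D.Wf u x * (∑ m, D.sff u j m x * D.gradUp u m x) +
      pd u i x * pd u k x / (2 * D.γ x ^ 2) * ∑ l, D.sff u j l x * D.gradUp D.γ l x := by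
  simp only [Finset.mul_sum, ← Finset.sum_add_distrib]
  refine Finset.sum_congr rfl fun l _ => ?_
  rw [Γg_eq D u hu, sff_symm D u hu x k i]
  ring

end Helpers

/-- **formula (55).** Let `b_{ij} = ⟨A X_*∂_i, X_*∂_j⟩` be the
components of the pullback `X*II` of the second fundamental form of the
Killing graph `Σ` to `P`.  Then its covariant derivative in `P` is related to
the covariant derivative of `II` on `Σ` by
`∇_k b_{ij} = ∇^Σ_k a_{ij} + (W/γ) a_{ik} a_j^l u_l + (W/γ) a_{jk} a_i^l u_l
  + (u_i u_k/(2γ²)) a_{jl} γ^l + (u_j u_k/(2γ²)) a_{il} γ^l`. -/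
theorem covariant_derivative_of_pullback_second_fundamental_form
    {n : ℕ} (D : LeafData n) (Ω : Set (Fin n → ℝ))
    (hΩo : IsOpen Ω) (hΩb : Bornology.IsBounded Ω)
    (u : (Fin n → ℝ) → ℝ) (hu : ContDiff ℝ (⊤ : ℕ∞) u) :
    ∀ x ∈ Ω, ∀ i j k : Fin n,
      D.covP2 (fun a b y => D.sff u a b y) k i j x =
        D.covG2 u (fun a b y => D.sff u a b y) k i j x +
          D.Wf u x / D.γ x * D.sff u i k x *
            (∑ l, (∑ m, D.gInv u x l m * D.sff u j m x) * pd u l x) +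
          D.Wf u x / D.γ x * D.sff u j k x *
            (∑ l, (∑ m, D.gInv u x l m * D.sff u i m x) * pd u l x) +
          pd u i x * pd u k x / (2 * (D.γ x) ^ 2) *
            (∑ l, D.sff u j l x * D.gradUp D.γ l x) +
          pd u j x * pd u k x / (2 * (D.γ x) ^ 2) *
            (∑ l, D.sff u i l x * D.gradUp D.γ l x) := by
  intro x _ i j k
  have hγ := (D.γ_pos x).ne'
  have hW := (Wf_pos D u x).ne'
  have h1 := Γg_contract D u hu x k i j
  have h2 := Γg_contract D u hu x k j i
  simp only [covP2, covG2, mix_contract]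
  simp only [fun l => sff_symm D u hu x l j]
  simp only [sff_symm D u hu x j k] at *
  rw [h1, h2]
  field_simp
  ring

end KMCF
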